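/- Let o, ι, 𝔱 ∈ ℝ^{n+2} satisfy ⟨o,o⟩ = ⟨ι,ι⟩ = 0, ⟨o,ι⟩ = −1, ⟨𝔱,𝔱⟩ = 1, ⟨o,𝔱⟩ = ⟨ι,𝔱⟩ = 0, let λ ∈ ℝ, and set A := (o−𝔱)∧(ι−λ𝔱). Then: (i) if 1−2λ > 0, then with μ := √(1−2λ) and v± := μ(λo−ι) ± (λo+ι−2λ𝔱) one has A(v±) = ±μ·v±, ⟨v±,v±⟩ = 0, and ⟨v₋,v₊⟩ = 4λ(1−2λ); in particular, for 0 < λ < 1/2 the Minkowski form restricted to span{o−𝔱, ι−λ𝔱} is nondegenerate and indefinite; (ii) if 1−2λ < 0, the Minkowski form restricted to span{o−𝔱, ι−λ𝔱} is positive definite; (iii) if 1−2λ = 0, the Minkowski form restricted to span{o−𝔱, ι−λ𝔱} is degenerate. -/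

import Mathlib

open scoped BigOperators Topology
open Filter Set MeasureTheory

noncomputable section

abbrev E (n : ℕ) := EuclideanSpace ℝ (Fin (n + 2))

/-- Minkowski inner product of signature (n+1,1). -/
def mink {n : ℕ} (x y : E n) : ℝ :=
  ∑ i, (if i = Fin.last (n + 1) then (-1 : ℝ) else 1) * x i * y i

variable {n : ℕ}

lemma mink_comm (x y : E n) : mink x y = mink y x :=
  Finset.sum_congr rfl fun i _ => by ring

lemma mink_add_right (v x y : E n) : mink v (x + y) = mink v x + mink v y := by
  simp [mink, mul_add, Finset.sum_add_distrib]

lemma mink_smul_right (v : E n) (c : ℝ) (x : E n) : mink v (c • x) = c * mink v x := by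
  unfold mink
  rw [Finset.mul_sum]
  refine Finset.sum_congr rfl fun i _ => ?_
  simp only [PiLp.smul_apply, smul_eq_mul]
  ring

lemma mink_add_left (x y v : E n) : mink (x + y) v = mink x v + mink y v := by
  rw [mink_comm, mink_add_right, mink_comm v x, mink_comm v y]

lemma mink_smul_left (c : ℝ) (x v : E n) : mink (c • x) v = c * mink x v := by
  rw [mink_comm, mink_smul_right, mink_comm v x]

/-- `v ∧ w` as an endomorphism: `x ↦ ⟨v,x⟩ w − ⟨w,x⟩ v`. -/
def wedge {n : ℕ} (v w : E n) : E n →L[ℝ] E n :=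
  LinearMap.toContinuousLinearMap
    { toFun := fun x => mink v x • w - mink w x • v
      map_add' := by
        intro x y
        simp only [mink_add_right, add_smul]
        abel
      map_smul' := by
        intro c x
        simp only [mink_smul_right, RingHom.id_apply, mul_smul, smul_sub] }

/-- rank one endomorphism `vw* : x ↦ ⟨x,w⟩ v`. -/
def rankOne {n : ℕ} (v w : E n) : E n →L[ℝ] E n :=
  LinearMap.toContinuousLinearMap
    { toFun := fun x => mink x w • v
      map_add' := by
        intro x y
        simp only [mink_add_left, add_smul]
      map_smul' := by
        intro c x
        simp only [mink_smul_left, RingHom.id_apply, mul_smul] }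

/-!
Put `p = o - 𝔱` and `q = ι - λ𝔱`, so that `⟨p,p⟩ = 1`, and let `A = p ∧ q`. The Gram
determinant of `p, q` is `2λ - 1`, and on the plane `span {p, q}` one has `A² = 1 - 2λ`, minus this
determinant. Its sign decides the type of the plane, since `A p` is orthogonal to `p` and
`⟨A p, A p⟩ = 2λ - 1`. If `A² = μ²` on the plane, then for every `w` in it the vectors `μ w ± A w`
satisfy `A v = ±μ v`, and they are null for `μ ≠ 0` because `A` is skew-adjoint. The vectors `v±`
arise from `w = λ p - q = λ o - ι`.
-/

section SkewAdjoint

variable {R V : Type*} [CommRing R] [AddCommGroup V] [Module R V]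
  {B : LinearMap.BilinForm R V} {f : Module.End R V} {μ : R} {v w : V}

lemma map_smul_add_map_of_map_map_eq (hw : f (f w) = μ ^ 2 • w) :
    f (μ • w + f w) = μ • (μ • w + f w) := by
  rw [map_add, map_smul, hw]
  module

lemma map_smul_sub_map_of_map_map_eq (hw : f (f w) = μ ^ 2 • w) :
    f (μ • w - f w) = (-μ) • (μ • w - f w) := by
  rw [map_sub, map_smul, hw]
  module

lemma apply_map_left_of_isSkewAdjoint (hf : B.IsSkewAdjoint f) (v w : V) :
    B (f v) w = -B v (f w) :=
  (hf v w).trans (map_neg (B v) (f w))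

lemma apply_self_eq_zero_of_isSkewAdjoint_of_map_eq_smul [NoZeroDivisors R] [NeZero (2 : R)]
    (hf : B.IsSkewAdjoint f) (hv : f v = μ • v) (hμ : μ ≠ 0) : B v v = 0 := by
  have hskew : μ * B v v = -(μ * B v v) := by
    simpa [hv] using apply_map_left_of_isSkewAdjoint hf v v
  have hdouble : 2 * μ * B v v = 0 := by linear_combination hskew
  exact (mul_eq_zero.mp hdouble).resolve_left (mul_ne_zero two_ne_zero hμ)

lemma apply_smul_sub_map_smul_add_map_of_map_map_eq (hB : B.IsSymm) (hf : B.IsSkewAdjoint f)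
    (hw : f (f w) = μ ^ 2 • w) : B (μ • w - f w) (μ • w + f w) = 2 * μ ^ 2 * B w w := by
  have hfw : B (f w) (f w) = -(μ ^ 2 * B w w) := by
    rw [apply_map_left_of_isSkewAdjoint hf, hw, map_smul, smul_eq_mul]
  simp only [map_sub, map_add, map_smul, LinearMap.sub_apply, LinearMap.smul_apply, smul_eq_mul,
    hB.eq (f w) w, hfw]
  ring

end SkewAdjoint

section Wedge

variable {R V : Type*} [CommRing R] [AddCommGroup V] [Module R V]

/-- The endomorphism `v ∧ w` of a module with bilinear form `B`, generalizing `wedge`. -/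
def wedgeEnd (B : LinearMap.BilinForm R V) (v w : V) : Module.End R V :=
  (B v).smulRight w - (B w).smulRight v

/-- The Gram determinant of two vectors with respect to a symmetric bilinear form; symmetry is
built into the off-diagonal term. -/
def gramDet (B : LinearMap.BilinForm R V) (v w : V) : R :=
  B v v * B w w - B v w ^ 2

variable {B : LinearMap.BilinForm R V} {p q x y : V}

lemma wedgeEnd_apply (B : LinearMap.BilinForm R V) (p q x : V) :
    wedgeEnd B p q x = B p x • q - B q x • p :=
  rfl

lemma isSkewAdjoint_wedgeEnd (hB : B.IsSymm) (p q : V) : B.IsSkewAdjoint (wedgeEnd B p q) := by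
  intro x y
  simp only [Pi.neg_apply, wedgeEnd_apply, map_neg, map_sub, map_smul, LinearMap.sub_apply,
    LinearMap.smul_apply, smul_eq_mul, hB.eq x p, hB.eq x q]
  ring

lemma wedgeEnd_apply_mem_span (B : LinearMap.BilinForm R V) (p q x : V) :
    wedgeEnd B p q x ∈ Submodule.span R {p, q} :=
  Submodule.mem_span_pair.mpr ⟨-B q x, B p x, by rw [wedgeEnd_apply]; module⟩

lemma wedgeEnd_wedgeEnd_apply (hB : B.IsSymm) (hx : x ∈ Submodule.span R {p, q}) :
    wedgeEnd B p q (wedgeEnd B p q x) = (-gramDet B p q) • x := by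
  obtain ⟨a, b, rfl⟩ := Submodule.mem_span_pair.mp hx
  simp only [wedgeEnd_apply, gramDet, map_sub, map_add, map_smul, hB.eq q p]
  module

lemma apply_wedgeEnd_wedgeEnd (hB : B.IsSymm) (hx : x ∈ Submodule.span R {p, q}) :
    B (wedgeEnd B p q x) (wedgeEnd B p q x) = gramDet B p q * B x x := by
  rw [apply_map_left_of_isSkewAdjoint (isSkewAdjoint_wedgeEnd hB p q),
    wedgeEnd_wedgeEnd_apply hB hx, map_smul, smul_eq_mul, neg_mul, neg_neg]

lemma eq_zero_of_gramDet_ne_zero_of_forall_mem_span [IsDomain R] [Module.IsTorsionFree R V]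
    (hB : B.IsSymm) (hdet : gramDet B p q ≠ 0) (hx : x ∈ Submodule.span R {p, q})
    (horth : ∀ y ∈ Submodule.span R {p, q}, B x y = 0) : x = 0 := by
  have hp : B p x = 0 :=
    (hB.eq p x).trans (horth p (Submodule.mem_span_of_mem (Set.mem_insert p {q})))
  have hq : B q x = 0 :=
    (hB.eq q x).trans (horth q (Submodule.mem_span_of_mem (Set.mem_insert_of_mem p rfl)))
  have hAx : wedgeEnd B p q x = 0 := by
    rw [wedgeEnd_apply, hp, hq, zero_smul, zero_smul, sub_zero]
  have hsmul : (-gramDet B p q) • x = 0 := by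
    rw [← wedgeEnd_wedgeEnd_apply hB hx, hAx, map_zero]
  exact (smul_eq_zero.mp hsmul).resolve_left (neg_ne_zero.mpr hdet)

lemma apply_wedgeEnd_left_eq_zero_of_gramDet_eq_zero (hB : B.IsSymm) (hdet : gramDet B p q = 0)
    (hy : y ∈ Submodule.span R {p, q}) : B (wedgeEnd B p q p) y = 0 := by
  obtain ⟨a, b, rfl⟩ := Submodule.mem_span_pair.mp hy
  have hpp : B (wedgeEnd B p q p) p = 0 := by
    simp only [wedgeEnd_apply, map_sub, map_smul, LinearMap.sub_apply, LinearMap.smul_apply,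
      smul_eq_mul]
    ring
  have hpq : B (wedgeEnd B p q p) q = gramDet B p q := by
    simp only [wedgeEnd_apply, gramDet, map_sub, map_smul, LinearMap.sub_apply,
      LinearMap.smul_apply, smul_eq_mul, hB.eq q p]
    ring
  rw [map_add, map_smul, map_smul, hpp, hpq, hdet, smul_zero, smul_zero, add_zero]

lemma apply_self_mul_apply_smul_add_smul (hB : B.IsSymm) (p q : V) (a b : R) :
    B p p * B (a • p + b • q) (a • p + b • q) =
      (a * B p p + b * B p q) ^ 2 + b ^ 2 * gramDet B p q := by
  simp only [gramDet, map_add, map_smul, LinearMap.add_apply, LinearMap.smul_apply, smul_eq_mul,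
    hB.eq q p]
  ring

variable [LinearOrder R] [IsStrictOrderedRing R]

lemma apply_self_pos_of_gramDet_pos (hB : B.IsSymm) (hp : 0 < B p p) (hdet : 0 < gramDet B p q)
    (hx : x ∈ Submodule.span R {p, q}) (hx0 : x ≠ 0) : 0 < B x x := by
  obtain ⟨a, b, rfl⟩ := Submodule.mem_span_pair.mp hx
  refine pos_of_mul_pos_right ?_ hp.le
  rw [apply_self_mul_apply_smul_add_smul hB]
  rcases eq_or_ne b 0 with rfl | hb
  · have ha : a ≠ 0 := by
      rintro rfl
      simp at hx0
    rw [zero_mul, add_zero, zero_pow two_ne_zero, zero_mul, add_zero]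
    positivity
  · positivity

lemma exists_mem_span_apply_self_neg_of_gramDet_neg (hB : B.IsSymm) (hp : 0 < B p p)
    (hdet : gramDet B p q < 0) : ∃ y ∈ Submodule.span R {p, q}, B y y < 0 := by
  refine ⟨wedgeEnd B p q p, wedgeEnd_apply_mem_span B p q p, ?_⟩
  rw [apply_wedgeEnd_wedgeEnd hB (Submodule.mem_span_of_mem (Set.mem_insert p {q}))]
  exact mul_neg_of_neg_of_pos hdet hp

end Wedge

section PolePlane

variable {R V : Type*} [CommRing R] [AddCommGroup V] [Module R V]

lemma smul_sub_mem_span (o ι 𝔱 : V) (lam : R) :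
    lam • o - ι ∈ Submodule.span R {o - 𝔱, ι - lam • 𝔱} :=
  Submodule.mem_span_pair.mpr ⟨lam, -1, by module⟩

/-- A pseudo-orthonormal triple: a null pair `o`, `ι` normalized by `B o ι = -1`, together with a
unit vector `𝔱` orthogonal to both. The form `B` is meant to be symmetric, so only one order of each
pair of vectors is recorded. -/
structure IsPseudoOrthonormalTriple (B : LinearMap.BilinForm R V) (o ι 𝔱 : V) : Prop where
  o_o : B o o = 0
  ι_ι : B ι ι = 0
  o_ι : B o ι = -1
  𝔱_𝔱 : B 𝔱 𝔱 = 1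
  o_𝔱 : B o 𝔱 = 0
  ι_𝔱 : B ι 𝔱 = 0

namespace IsPseudoOrthonormalTriple

variable {B : LinearMap.BilinForm R V} {o ι 𝔱 : V}

lemma apply_sub_self (h : IsPseudoOrthonormalTriple B o ι 𝔱) (hB : B.IsSymm) :
    B (o - 𝔱) (o - 𝔱) = 1 := by
  simp [hB.eq 𝔱 o, h.o_o, h.𝔱_𝔱, h.o_𝔱]

lemma apply_sub_sub_smul (h : IsPseudoOrthonormalTriple B o ι 𝔱) (hB : B.IsSymm) (lam : R) :
    B (o - 𝔱) (ι - lam • 𝔱) = lam - 1 := by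
  simp only [map_sub, map_smul, LinearMap.sub_apply, smul_eq_mul, hB.eq 𝔱 ι, h.o_ι, h.𝔱_𝔱, h.o_𝔱,
    h.ι_𝔱]
  ring

lemma apply_sub_smul_self (h : IsPseudoOrthonormalTriple B o ι 𝔱) (hB : B.IsSymm) (lam : R) :
    B (ι - lam • 𝔱) (ι - lam • 𝔱) = lam ^ 2 := by
  simp only [map_sub, map_smul, LinearMap.sub_apply, LinearMap.smul_apply, smul_eq_mul,
    hB.eq 𝔱 ι, h.ι_ι, h.𝔱_𝔱, h.ι_𝔱]
  ring

lemma gramDet_sub_sub_smul (h : IsPseudoOrthonormalTriple B o ι 𝔱) (hB : B.IsSymm) (lam : R) :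
    gramDet B (o - 𝔱) (ι - lam • 𝔱) = -(1 - 2 * lam) := by
  rw [gramDet, h.apply_sub_self hB, h.apply_sub_sub_smul hB, h.apply_sub_smul_self hB]
  ring

lemma wedgeEnd_apply_sub_ne_zero [Nontrivial R] (h : IsPseudoOrthonormalTriple B o ι 𝔱)
    (hB : B.IsSymm) (lam : R) : wedgeEnd B (o - 𝔱) (ι - lam • 𝔱) (o - 𝔱) ≠ 0 := by
  intro hzero
  have happly : B o (wedgeEnd B (o - 𝔱) (ι - lam • 𝔱) (o - 𝔱)) = -1 := by
    simp [wedgeEnd_apply, hB.eq 𝔱 o, h.o_o, h.o_ι, h.𝔱_𝔱, h.o_𝔱]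
  rw [hzero, map_zero] at happly
  exact neg_ne_zero.mpr one_ne_zero happly.symm

lemma apply_smul_sub_self (h : IsPseudoOrthonormalTriple B o ι 𝔱) (hB : B.IsSymm) (lam : R) :
    B (lam • o - ι) (lam • o - ι) = 2 * lam := by
  simp only [map_sub, map_smul, LinearMap.sub_apply, LinearMap.smul_apply, smul_eq_mul,
    hB.eq ι o, h.o_o, h.ι_ι, h.o_ι]
  ring

lemma wedgeEnd_apply_smul_sub (h : IsPseudoOrthonormalTriple B o ι 𝔱) (hB : B.IsSymm) (lam : R) :
    wedgeEnd B (o - 𝔱) (ι - lam • 𝔱) (lam • o - ι) = lam • o + ι - (2 * lam) • 𝔱 := by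
  simp only [wedgeEnd_apply, map_sub, map_smul, LinearMap.sub_apply, LinearMap.smul_apply,
    smul_eq_mul, hB.eq ι o, hB.eq 𝔱 o, hB.eq 𝔱 ι, h.o_o, h.ι_ι, h.o_ι, h.o_𝔱, h.ι_𝔱]
  module

lemma wedgeEnd_wedgeEnd_apply_smul_sub (h : IsPseudoOrthonormalTriple B o ι 𝔱) (hB : B.IsSymm)
    (lam : R) :
    wedgeEnd B (o - 𝔱) (ι - lam • 𝔱) (wedgeEnd B (o - 𝔱) (ι - lam • 𝔱) (lam • o - ι)) =
      (1 - 2 * lam) • (lam • o - ι) := by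
  rw [wedgeEnd_wedgeEnd_apply hB (smul_sub_mem_span o ι 𝔱 lam), h.gramDet_sub_sub_smul hB, neg_neg]

end IsPseudoOrthonormalTriple

end PolePlane

theorem stmt13_general {K V : Type*} [Field K] [LinearOrder K] [IsStrictOrderedRing K]
    [AddCommGroup V] [Module K V] {B : LinearMap.BilinForm K V} (hB : B.IsSymm) {o ι 𝔱 : V}
    (h : IsPseudoOrthonormalTriple B o ι 𝔱) (lam : K) :
    (0 < 1 - 2 * lam → ∀ μ : K, μ ^ 2 = 1 - 2 * lam →
      wedgeEnd B (o - 𝔱) (ι - lam • 𝔱) (μ • (lam • o - ι) + (lam • o + ι - (2 * lam) • 𝔱)) =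
        μ • (μ • (lam • o - ι) + (lam • o + ι - (2 * lam) • 𝔱)) ∧
      wedgeEnd B (o - 𝔱) (ι - lam • 𝔱) (μ • (lam • o - ι) - (lam • o + ι - (2 * lam) • 𝔱)) =
        (-μ) • (μ • (lam • o - ι) - (lam • o + ι - (2 * lam) • 𝔱)) ∧
      B (μ • (lam • o - ι) + (lam • o + ι - (2 * lam) • 𝔱))
        (μ • (lam • o - ι) + (lam • o + ι - (2 * lam) • 𝔱)) = 0 ∧
      B (μ • (lam • o - ι) - (lam • o + ι - (2 * lam) • 𝔱))
        (μ • (lam • o - ι) - (lam • o + ι - (2 * lam) • 𝔱)) = 0 ∧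
      B (μ • (lam • o - ι) - (lam • o + ι - (2 * lam) • 𝔱))
        (μ • (lam • o - ι) + (lam • o + ι - (2 * lam) • 𝔱)) = 4 * lam * (1 - 2 * lam)) ∧
    (0 < 1 - 2 * lam →
      (∀ x ∈ Submodule.span K {o - 𝔱, ι - lam • 𝔱},
        (∀ y ∈ Submodule.span K {o - 𝔱, ι - lam • 𝔱}, B x y = 0) → x = 0) ∧
      (∃ x ∈ Submodule.span K {o - 𝔱, ι - lam • 𝔱}, 0 < B x x) ∧
      (∃ y ∈ Submodule.span K {o - 𝔱, ι - lam • 𝔱}, B y y < 0)) ∧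
    (1 - 2 * lam < 0 →
      ∀ x ∈ Submodule.span K {o - 𝔱, ι - lam • 𝔱}, x ≠ 0 → 0 < B x x) ∧
    (1 - 2 * lam = 0 →
      ∃ x ∈ Submodule.span K {o - 𝔱, ι - lam • 𝔱}, x ≠ 0 ∧
        ∀ y ∈ Submodule.span K {o - 𝔱, ι - lam • 𝔱}, B x y = 0) := by
  have hdet := h.gramDet_sub_sub_smul hB lam
  have hpos : 0 < B (o - 𝔱) (o - 𝔱) := one_pos.trans_eq (h.apply_sub_self hB).symm
  refine ⟨fun hlam μ hμ => ?_, fun hlam => ⟨fun x hx horth => ?_, ?_, ?_⟩,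
    fun hlam x hx hx0 => ?_, fun hlam => ?_⟩
  · have hskew := isSkewAdjoint_wedgeEnd hB (o - 𝔱) (ι - lam • 𝔱)
    have hsq := h.wedgeEnd_wedgeEnd_apply_smul_sub hB lam
    have hμ0 : μ ≠ 0 := by
      rintro rfl
      exact hlam.ne (by simpa using hμ)
    rw [← hμ] at hsq
    have hplus := map_smul_add_map_of_map_map_eq hsq
    have hminus := map_smul_sub_map_of_map_map_eq hsq
    have hcross := apply_smul_sub_map_smul_add_map_of_map_map_eq hB hskew hsq
    rw [h.wedgeEnd_apply_smul_sub hB] at hplus hminus hcross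
    refine ⟨hplus, hminus,
      apply_self_eq_zero_of_isSkewAdjoint_of_map_eq_smul hskew hplus hμ0,
      apply_self_eq_zero_of_isSkewAdjoint_of_map_eq_smul hskew hminus (neg_ne_zero.mpr hμ0),
      hcross.trans ?_⟩
    rw [h.apply_smul_sub_self hB, hμ]
    ring
  · exact eq_zero_of_gramDet_ne_zero_of_forall_mem_span hB
      (hdet.trans_ne (neg_ne_zero.mpr hlam.ne')) hx horth
  · exact ⟨_, Submodule.mem_span_of_mem (Set.mem_insert _ _), hpos⟩
  · exact exists_mem_span_apply_self_neg_of_gramDet_neg hB hpos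
      (hdet.trans_lt (neg_lt_zero.mpr hlam))
  · exact apply_self_pos_of_gramDet_pos hB hpos ((neg_pos.mpr hlam).trans_eq hdet.symm) hx hx0
  · exact ⟨_, wedgeEnd_apply_mem_span B _ _ _, h.wedgeEnd_apply_sub_ne_zero hB lam,
      fun y hy =>
        apply_wedgeEnd_left_eq_zero_of_gramDet_eq_zero hB (hdet.trans (by rw [hlam, neg_zero])) hy⟩

/-- The Minkowski inner product `mink` as a bundled bilinear form. -/
def minkForm (n : ℕ) : LinearMap.BilinForm ℝ (E n) :=
  LinearMap.mk₂ ℝ mink mink_add_left mink_smul_left mink_add_right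
    fun c x y => mink_smul_right x c y

lemma isSymm_minkForm (n : ℕ) : (minkForm n).IsSymm :=
  ⟨mink_comm⟩

/-- Lemma 5.1: algebraic type and null eigenvectors of the pure pole
form `ξ_λ` arising from the singular gauge transformation. -/
theorem stmt13 {n : ℕ} (o ι 𝔱 : E n) (lam : ℝ)
    (h1 : mink o o = 0) (h2 : mink ι ι = 0) (h3 : mink o ι = -1)
    (h4 : mink 𝔱 𝔱 = 1) (h5 : mink o 𝔱 = 0) (h6 : mink ι 𝔱 = 0) :
    ((0 < 1 - 2 * lam) →
      (wedge (o - 𝔱) (ι - lam • 𝔱))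
          (Real.sqrt (1 - 2 * lam) • (lam • o - ι) + (lam • o + ι - (2 * lam) • 𝔱)) =
        Real.sqrt (1 - 2 * lam) •
          (Real.sqrt (1 - 2 * lam) • (lam • o - ι) + (lam • o + ι - (2 * lam) • 𝔱)) ∧
      (wedge (o - 𝔱) (ι - lam • 𝔱))
          (Real.sqrt (1 - 2 * lam) • (lam • o - ι) - (lam • o + ι - (2 * lam) • 𝔱)) =
        (-Real.sqrt (1 - 2 * lam)) •
          (Real.sqrt (1 - 2 * lam) • (lam • o - ι) - (lam • o + ι - (2 * lam) • 𝔱)) ∧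
      mink (Real.sqrt (1 - 2 * lam) • (lam • o - ι) + (lam • o + ι - (2 * lam) • 𝔱))
          (Real.sqrt (1 - 2 * lam) • (lam • o - ι) + (lam • o + ι - (2 * lam) • 𝔱)) = 0 ∧
      mink (Real.sqrt (1 - 2 * lam) • (lam • o - ι) - (lam • o + ι - (2 * lam) • 𝔱))
          (Real.sqrt (1 - 2 * lam) • (lam • o - ι) - (lam • o + ι - (2 * lam) • 𝔱)) = 0 ∧
      mink (Real.sqrt (1 - 2 * lam) • (lam • o - ι) - (lam • o + ι - (2 * lam) • 𝔱))
          (Real.sqrt (1 - 2 * lam) • (lam • o - ι) + (lam • o + ι - (2 * lam) • 𝔱)) =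
        4 * lam * (1 - 2 * lam) ∧
      (0 < lam → lam < 1 / 2 →
        (∀ x ∈ Submodule.span ℝ ({o - 𝔱, ι - lam • 𝔱} : Set (E n)),
          (∀ y ∈ Submodule.span ℝ ({o - 𝔱, ι - lam • 𝔱} : Set (E n)), mink x y = 0) → x = 0) ∧
        (∃ x ∈ Submodule.span ℝ ({o - 𝔱, ι - lam • 𝔱} : Set (E n)), 0 < mink x x) ∧
        (∃ y ∈ Submodule.span ℝ ({o - 𝔱, ι - lam • 𝔱} : Set (E n)), mink y y < 0))) ∧
    ((1 - 2 * lam < 0) →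
      ∀ x ∈ Submodule.span ℝ ({o - 𝔱, ι - lam • 𝔱} : Set (E n)), x ≠ 0 → 0 < mink x x) ∧
    ((1 - 2 * lam = 0) →
      ∃ x ∈ Submodule.span ℝ ({o - 𝔱, ι - lam • 𝔱} : Set (E n)), x ≠ 0 ∧
        ∀ y ∈ Submodule.span ℝ ({o - 𝔱, ι - lam • 𝔱} : Set (E n)), mink x y = 0) := by
  obtain ⟨heigen, hindef, hposDef, hdegen⟩ :=
    stmt13_general (isSymm_minkForm n) ⟨h1, h2, h3, h4, h5, h6⟩ lam
  refine ⟨fun h => ?_, hposDef, hdegen⟩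
  obtain ⟨hplus, hminus, hnull_plus, hnull_minus, hcross⟩ := heigen h _ (Real.sq_sqrt h.le)
  exact ⟨hplus, hminus, hnull_plus, hnull_minus, hcross, fun _ _ => hindef h⟩
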